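/- arXiv:quant-ph/0510185 — 2 statements merged into one kernel-verified Lean document; each statement's English description precedes it below -/
import Mathlib

section
/- Let G be a finite group and ρ a nontrivial irreducible representation of G of dimension d_ρ. Define B^{ρ,ρ} := (1/|G|) ∑_{s ∈ G} ([[I, ρ(s)],[ρ(s⁻¹), I]])^{⊗ 2} (a 4d_ρ² × 4d_ρ² matrix). Then the spectrum of B^{ρ,ρ} is either {1 (multiplicity 2d_ρ²), 1 + 1/d_ρ (multiplicity d_ρ²), 1 − 1/d_ρ (multiplicity d_ρ²)}, or {2 (multiplicity 1), 0 (multiplicity 1), 1 (multiplicity 2d_ρ² − 2), 1 ± 1/d_ρ (multiplicity d_ρ² each)}. -/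
namespace SpecB
open Kronecker Polynomial Matrix

lemma charpoly_sym {n : Type*} [Fintype n] [DecidableEq n] (B : Matrix n n ℂ) :
    (fromBlocks 1 B B 1).charpoly = (B * B).charpoly.comp ((X - 1) ^ 2) := by
  have h1 : (1 : Matrix n n ℂ).charmatrix = (X - 1 : ℂ[X]) • (1 : Matrix n n ℂ[X]) := by
    ext i j
    by_cases h : i = j
    · subst h; simp [charmatrix_apply]
    · simp [charmatrix_apply, h]
  have key : ∀ (A D : Matrix n n ℂ[X]), (fromBlocks A D D A).det = (A + D).det * (A - D).det := by
    intro A D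
    have h : fromBlocks 1 1 0 1 * fromBlocks A D D A * fromBlocks 1 (-1) 0 1
        = fromBlocks (A + D) 0 D (A - D) := by
      simp [fromBlocks_multiply, sub_eq_add_neg, add_comm]
      abel
    have := congrArg det h
    simpa [det_mul] using this
  rw [charpoly, charmatrix_fromBlocks, h1, key, ← det_mul, charpoly]
  have : ((B * B).charmatrix.det).comp ((X - 1) ^ 2)
     = (compRingHom ((X - 1 : ℂ[X]) ^ 2)) (B * B).charmatrix.det := rfl
  rw [this, RingHom.map_det]
  congr 1
  have h2 : (compRingHom ((X - 1 : ℂ[X]) ^ 2)).mapMatrix (B * B).charmatrix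
     = ((X - 1 : ℂ[X]) ^ 2) • (1 : Matrix n n ℂ[X]) - (B * B).map C := by
    ext1 i j
    by_cases h : i = j
    · subst h; simp [-Matrix.map_mul]
    · simp [h, -Matrix.map_mul]
  rw [h2, Matrix.map_mul]
  simp [mul_sub, add_mul, sub_mul, pow_two, mul_add, smul_smul]
  abel

lemma schur {G : Type*} [Group G] {d : ℕ}
    (ρ : G →* Matrix (Fin d) (Fin d) ℂ)
    (hρirr : ∀ W : Submodule ℂ (Fin d → ℂ),
      (∀ g : G, ∀ v ∈ W, (ρ g).mulVec v ∈ W) → W = ⊥ ∨ W = ⊤)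
    (hd : d ≠ 0) (M : Matrix (Fin d) (Fin d) ℂ) (hM : ∀ g, ρ g * M = M * ρ g) :
    ∃ c : ℂ, M = c • 1 := by
  have : NeZero d := ⟨hd⟩
  obtain ⟨c, hc⟩ := Module.End.exists_eigenvalue (Matrix.mulVecLin M)
  refine ⟨c, ?_⟩
  have := hρirr (Module.End.eigenspace (Matrix.mulVecLin M) c) (by
    intro g v hv
    rw [Module.End.mem_eigenspace_iff] at hv ⊢
    simp only [mulVecLin_apply] at hv ⊢
    rw [mulVec_mulVec, ← hM, ← mulVec_mulVec, hv, mulVec_smul])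
  rcases this with h | h
  · exact absurd h hc
  · apply ext_of_mulVec_single
    intro i
    have : (Pi.single i 1 : Fin d → ℂ) ∈ Module.End.eigenspace (Matrix.mulVecLin M) c := by
      rw [h]; trivial
    rw [Module.End.mem_eigenspace_iff] at this
    rw [smul_mulVec, one_mulVec]
    exact this

lemma avg_zero {G : Type*} [Group G] [Fintype G] {d : ℕ}
    (ρ : G →* Matrix (Fin d) (Fin d) ℂ)
    (hρirr : ∀ W : Submodule ℂ (Fin d → ℂ),
      (∀ g : G, ∀ v ∈ W, (ρ g).mulVec v ∈ W) → W = ⊥ ∨ W = ⊤)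
    (hnontriv : ∃ g : G, ρ g ≠ 1) : ∑ s, ρ s = 0 := by
  have hinv : ∀ g, ρ g * ∑ s, ρ s = ∑ s, ρ s := by
    intro g
    rw [Finset.mul_sum]
    simp_rw [← map_mul]
    exact Equiv.sum_comp (Equiv.mulLeft g) (fun s => ρ s)
  let W : Submodule ℂ (Fin d → ℂ) := ⨅ g, LinearMap.ker (Matrix.mulVecLin (ρ g) - LinearMap.id)
  have hW : ∀ v, v ∈ W ↔ ∀ g, ρ g *ᵥ v = v := by
    intro v
    simp [W, sub_eq_zero]
  rcases hρirr W (by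
    intro g v hv
    rw [(hW v).1 hv g]; exact hv) with h | h
  · apply ext_of_mulVec_single
    intro i
    have : (∑ s, ρ s) *ᵥ (Pi.single i 1 : Fin d → ℂ) ∈ W := by
      rw [hW]; intro g; rw [mulVec_mulVec, hinv]
    rw [h] at this
    rw [(Submodule.mem_bot ℂ).1 this, zero_mulVec]
  · exfalso
    obtain ⟨g, hg⟩ := hnontriv
    apply hg
    apply ext_of_mulVec_single
    intro i
    rw [one_mulVec]
    exact (hW _).1 (h ▸ Submodule.mem_top) g

lemma avg_swap {G : Type*} [Group G] [Fintype G] {d : ℕ}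
    (ρ : G →* Matrix (Fin d) (Fin d) ℂ)
    (hρirr : ∀ W : Submodule ℂ (Fin d → ℂ),
      (∀ g : G, ∀ v ∈ W, (ρ g).mulVec v ∈ W) → W = ⊥ ∨ W = ⊤)
    (hd : d ≠ 0) (i j k l : Fin d) :
    (Fintype.card G : ℂ)⁻¹ * ∑ s, ρ s i j * ρ s⁻¹ k l
      = if i = l ∧ j = k then (d : ℂ)⁻¹ else 0 := by
  set N : Matrix (Fin d) (Fin d) ℂ := single j k 1
  set M := (Fintype.card G : ℂ)⁻¹ • ∑ s, ρ s * N * ρ s⁻¹ with hMdef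
  have hM : ∀ g, ρ g * M = M * ρ g := by
    intro g
    simp only [hMdef, mul_smul_comm, smul_mul_assoc, Finset.mul_sum, Finset.sum_mul]
    congr 1
    rw [← Equiv.sum_comp (Equiv.mulLeft g) (fun s => ρ s * N * ρ s⁻¹ * ρ g)]
    refine Finset.sum_congr rfl fun s _ => ?_
    simp only [Equiv.coe_mulLeft, _root_.mul_inv_rev, map_mul, mul_assoc]
    rw [← map_mul ρ g⁻¹ g]
    simp
  obtain ⟨c, hc⟩ := schur ρ hρirr hd M hM
  have hG : (Fintype.card G : ℂ) ≠ 0 := by simp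
  have htr : M.trace = if j = k then 1 else 0 := by
    have : ∀ s, (ρ s * N * ρ s⁻¹).trace = N.trace := by
      intro s
      rw [trace_mul_comm, ← mul_assoc, ← map_mul]; simp
    simp only [hMdef, trace_smul, trace_sum, this]
    by_cases h : j = k
    · subst h; simp [N, hG]
    · simp [N, h, trace_single_eq_of_ne]
  have hc2 : c * d = if j = k then 1 else 0 := by
    rw [← htr, hc]; simp [trace_smul]
  have hd' : (d : ℂ) ≠ 0 := by exact_mod_cast hd
  have hc3 : c = if j = k then (d : ℂ)⁻¹ else 0 := by
    split_ifs at hc2 ⊢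
    · field_simp; exact hc2
    · simpa [hd'] using hc2
  have hent : M i l = (Fintype.card G : ℂ)⁻¹ * ∑ s, ρ s i j * ρ s⁻¹ k l := by
    simp only [hMdef, Matrix.smul_apply, Matrix.sum_apply, smul_eq_mul]
    congr 1
    refine Finset.sum_congr rfl fun s _ => ?_
    rw [mul_apply, Finset.sum_eq_single k]
    · simp [N]
    · intro b _ hb
      simp [N, Matrix.mul_apply, single_apply, hb.symm]
    · simp
  rw [← hent, hc, hc3]
  by_cases h1 : i = l <;> by_cases h2 : j = k <;> simp [h1, h2]

lemma rank_one {G : Type*} [Group G] {d : ℕ}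
    (ρ : G →* Matrix (Fin d) (Fin d) ℂ)
    (hρu : ∀ g, ρ g ∈ Matrix.unitaryGroup (Fin d) ℂ)
    (hρirr : ∀ W : Submodule ℂ (Fin d → ℂ),
      (∀ g : G, ∀ v ∈ W, (ρ g).mulVec v ∈ W) → W = ⊥ ∨ W = ⊤)
    (hd : d ≠ 0) (S T : Matrix (Fin d) (Fin d) ℂ)
    (hS : ∀ g, ρ g * S * (ρ g)ᵀ = S) (hT : ∀ g, ρ g * T * (ρ g)ᵀ = T) (hS0 : S ≠ 0) :
    ∃ c : ℂ, T = c • S := by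
  have hconj : ∀ g, (ρ g)ᵀ * (ρ g)ᴴᵀ = 1 := by
    intro g
    rw [← transpose_mul, ← star_eq_conjTranspose, (mem_unitaryGroup_iff'.1 (hρu g)), transpose_one]
  have hcomm : ∀ R : Matrix (Fin d) (Fin d) ℂ, (∀ g, ρ g * R * (ρ g)ᵀ = R) →
      ∀ g, ρ g * R = R * (ρ g)ᴴᵀ := by
    intro R hR g
    conv_rhs => rw [← hR g]
    rw [mul_assoc _ _ (ρ g)ᴴᵀ, hconj, mul_one]
  have hsurj : Function.Surjective S.mulVec := by
    rcases hρirr (LinearMap.range S.mulVecLin) (by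
      rintro g _ ⟨w, rfl⟩
      refine ⟨(ρ g)ᴴᵀ *ᵥ w, ?_⟩
      simp [hcomm S hS g]) with h | h
    · exfalso
      apply hS0
      rw [LinearMap.range_eq_bot] at h
      apply ext_of_mulVec_single
      intro i
      have := congrArg (fun f => f (Pi.single i 1)) h
      rw [zero_mulVec]; exact this
    · exact LinearMap.range_eq_top.1 h
  have hu : IsUnit S := mulVec_surjective_iff_isUnit.1 hsurj
  obtain ⟨U, rfl⟩ := hu
  obtain ⟨c, hc⟩ := schur ρ hρirr hd (T * (↑U⁻¹ : Matrix (Fin d) (Fin d) ℂ)) (by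
    intro g
    have h1 := hcomm _ hS g
    have h2 := hcomm _ hT g
    rw [← mul_assoc, h2, mul_assoc, mul_assoc]
    congr 1
    rw [Units.eq_inv_mul_iff_mul_eq, ← mul_assoc, ← h1, mul_assoc]
    simp)
  refine ⟨c, ?_⟩
  have := congrArg (· * (U : Matrix (Fin d) (Fin d) ℂ)) hc
  simpa [mul_assoc] using this

lemma P_form {G : Type*} [Group G] [Fintype G] {d : ℕ}
    (ρ : G →* Matrix (Fin d) (Fin d) ℂ)
    (hρu : ∀ g, ρ g ∈ Matrix.unitaryGroup (Fin d) ℂ)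
    (hρirr : ∀ W : Submodule ℂ (Fin d → ℂ),
      (∀ g : G, ∀ v ∈ W, (ρ g).mulVec v ∈ W) → W = ⊥ ∨ W = ⊤)
    (hd : d ≠ 0) (P : Matrix (Fin d × Fin d) (Fin d × Fin d) ℂ)
    (hP : P = (Fintype.card G : ℂ)⁻¹ • ∑ s, ρ s ⊗ₖ ρ s) :
    (P * P).charpoly = X ^ (d ^ 2) ∨ (P * P).charpoly = X ^ (d ^ 2 - 1) * (X - 1) := by
  have hG : (Fintype.card G : ℂ) ≠ 0 := by simp
  have hinv : ∀ g, (ρ g ⊗ₖ ρ g) * P = P := by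
    intro g
    rw [hP, mul_smul_comm, Finset.mul_sum]
    congr 1
    simp_rw [← mul_kronecker_mul, ← map_mul]
    exact Equiv.sum_comp (Equiv.mulLeft g) (fun s => ρ s ⊗ₖ ρ s)
  have hPP : P * P = P := by
    nth_rewrite 1 [hP]
    rw [smul_mul_assoc, Finset.sum_mul]
    simp [hinv, ← Nat.cast_smul_eq_nsmul ℂ, smul_smul, hG]
  rw [hPP]
  by_cases h0 : P = 0
  · left; rw [h0]; simp [charpoly_zero, pow_two]
  right
  let T : Fin d × Fin d → Matrix (Fin d) (Fin d) ℂ := fun q => Matrix.of fun i k => P (i, k) q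
  have hTinv : ∀ q g, ρ g * T q * (ρ g)ᵀ = T q := by
    intro q g
    ext i k
    have := congrFun (congrFun (hinv g) (i, k)) q
    rw [mul_apply, Fintype.sum_prod_type] at this
    simp only [T, of_apply]
    rw [← this, mul_apply]
    simp only [mul_apply, Finset.sum_mul, kroneckerMap_apply, transpose_apply, of_apply]
    rw [Finset.sum_comm]
    refine Finset.sum_congr rfl fun a _ => Finset.sum_congr rfl fun b _ => ?_
    ring
  obtain ⟨q0, hq0⟩ : ∃ q, T q ≠ 0 := by
    by_contra! h
    apply h0
    ext ⟨i, k⟩ q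
    exact congrFun (congrFun (h q) i) k
  choose v hv using fun q => rank_one ρ hρu hρirr hd (T q0) (T q) (hTinv q0) (hTinv q) hq0
  let u : Fin d × Fin d → ℂ := fun p => P p q0
  have hPuv : P = vecMulVec u v := by
    ext ⟨i, k⟩ q
    have := congrFun (congrFun (hv q) i) k
    simp only [T, of_apply, Matrix.smul_apply, smul_eq_mul] at this
    rw [this, vecMulVec_apply, mul_comm]
  have huv : u ⬝ᵥ v = 1 := by
    have h1 := hPP
    rw [hPuv, vecMulVec_mul_vecMulVec] at h1
    by_contra hne
    apply h0
    ext p q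
    have h2 := congrFun (congrFun h1 p) q
    rw [hPuv]
    simp only [vecMulVec_apply, Pi.smul_apply, smul_eq_mul, Matrix.zero_apply, Matrix.smul_apply] at h2 ⊢
    rw [dotProduct_comm] at h2
    have h3 : (u ⬝ᵥ v - 1) * (u p * v q) = 0 := by linear_combination h2
    exact (mul_eq_zero.1 h3).resolve_left (sub_ne_zero.2 hne)
  rw [hPuv, charpoly_vecMulVec, huv]
  obtain ⟨m, hm⟩ : ∃ m, d ^ 2 = m + 1 := Nat.exists_eq_succ_of_ne_zero (by positivity)
  have : Fintype.card (Fin d × Fin d) = m + 1 := by rw [← hm]; simp [pow_two]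
  rw [this, hm]
  simp
  ring

def e (α : Type*) : (α ⊕ α) × (α ⊕ α) ≃ (α × α ⊕ α × α) ⊕ (α × α ⊕ α × α) where
  toFun
    | (Sum.inl i, Sum.inl j) => Sum.inl (Sum.inl (i, j))
    | (Sum.inr i, Sum.inr j) => Sum.inl (Sum.inr (i, j))
    | (Sum.inl i, Sum.inr j) => Sum.inr (Sum.inl (i, j))
    | (Sum.inr i, Sum.inl j) => Sum.inr (Sum.inr (i, j))
  invFun
    | Sum.inl (Sum.inl (i, j)) => (Sum.inl i, Sum.inl j)
    | Sum.inl (Sum.inr (i, j)) => (Sum.inr i, Sum.inr j)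
    | Sum.inr (Sum.inl (i, j)) => (Sum.inl i, Sum.inr j)
    | Sum.inr (Sum.inr (i, j)) => (Sum.inr i, Sum.inl j)
  left_inv := by rintro ⟨_ | _, _ | _⟩ <;> rfl
  right_inv := by rintro ((_ | _) | (_ | _)) <;> rfl

lemma charpoly_B {G : Type*} [Group G] [Fintype G] {d : ℕ}
    (ρ : G →* Matrix (Fin d) (Fin d) ℂ)
    (hsum : ∑ s, ρ s = 0) :
    ((Fintype.card G : ℂ)⁻¹ • ∑ s : G,
        (Matrix.fromBlocks 1 (ρ s) (ρ s⁻¹) 1) ⊗ₖ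
          (Matrix.fromBlocks 1 (ρ s) (ρ s⁻¹) 1)).charpoly =
    (fromBlocks 1 ((Fintype.card G : ℂ)⁻¹ • ∑ s, ρ s ⊗ₖ ρ s)
      ((Fintype.card G : ℂ)⁻¹ • ∑ s, ρ s ⊗ₖ ρ s) 1).charpoly *
    (fromBlocks 1 ((Fintype.card G : ℂ)⁻¹ • ∑ s, ρ s ⊗ₖ ρ s⁻¹)
      ((Fintype.card G : ℂ)⁻¹ • ∑ s, ρ s ⊗ₖ ρ s⁻¹) 1).charpoly := by
  have hG : (Fintype.card G : ℂ) ≠ 0 := by simp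
  have hs1 : ∀ i j, ∑ s, ρ s i j = 0 := by
    intro i j
    rw [← Matrix.sum_apply, hsum]; rfl
  have hs2 : ∀ i j, ∑ s, ρ s⁻¹ i j = 0 := by
    intro i j
    rw [← hs1 i j]
    exact Equiv.sum_comp (Equiv.inv G) (fun s => ρ s i j)
  have hs3 : ∀ i j k l, ∑ s, ρ s⁻¹ i j * ρ s⁻¹ k l = ∑ s, ρ s i j * ρ s k l := by
    intro i j k l
    exact Equiv.sum_comp (Equiv.inv G) (fun s => ρ s i j * ρ s k l)
  have hs4 : ∀ i j k l, ∑ s, ρ s⁻¹ i j * ρ s k l = ∑ s, ρ s i j * ρ s⁻¹ k l := by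
    intro i j k l
    rw [← Equiv.sum_comp (Equiv.inv G) (fun s => ρ s i j * ρ s⁻¹ k l)]
    simp
  rw [← charpoly_fromBlocks_zero₁₂ (M₂₁ := 0), ← charpoly_reindex (e (Fin d))]
  congr 1
  ext ((⟨i, k⟩ | ⟨i, k⟩) | (⟨i, k⟩ | ⟨i, k⟩)) ((⟨j, l⟩ | ⟨j, l⟩) | (⟨j, l⟩ | ⟨j, l⟩)) <;>
  simp [e, Matrix.sum_apply, ← Finset.mul_sum, ← Finset.sum_mul, hs1, hs2, hs3, hs4, one_apply, hG] <;>
  (split_ifs <;> simp_all)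

end SpecB

open Kronecker Polynomial in
theorem spectrum_B_rho_rho
    {G : Type*} [Group G] [Fintype G] {d : ℕ}
    (ρ : G →* Matrix (Fin d) (Fin d) ℂ)
    (hρu : ∀ g, ρ g ∈ Matrix.unitaryGroup (Fin d) ℂ)
    (hρirr : ∀ W : Submodule ℂ (Fin d → ℂ),
      (∀ g : G, ∀ v ∈ W, (ρ g).mulVec v ∈ W) → W = ⊥ ∨ W = ⊤)
    (hnontriv : ∃ g : G, ρ g ≠ 1) :
    ((Fintype.card G : ℂ)⁻¹ • ∑ s : G,
        (Matrix.fromBlocks 1 (ρ s) (ρ s⁻¹) 1) ⊗ₖ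
          (Matrix.fromBlocks 1 (ρ s) (ρ s⁻¹) 1)).charpoly
        = (X - C 1) ^ (2 * d ^ 2) * (X - C (1 + (d : ℂ)⁻¹)) ^ (d ^ 2) *
            (X - C (1 - (d : ℂ)⁻¹)) ^ (d ^ 2) ∨
      ((Fintype.card G : ℂ)⁻¹ • ∑ s : G,
          (Matrix.fromBlocks 1 (ρ s) (ρ s⁻¹) 1) ⊗ₖ
            (Matrix.fromBlocks 1 (ρ s) (ρ s⁻¹) 1)).charpoly
        = (X - C 2) * X * (X - C 1) ^ (2 * d ^ 2 - 2) *
            (X - C (1 + (d : ℂ)⁻¹)) ^ (d ^ 2) * (X - C (1 - (d : ℂ)⁻¹)) ^ (d ^ 2) := by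
  have hd : d ≠ 0 := by
    rintro rfl
    obtain ⟨g, hg⟩ := hnontriv
    exact hg (Subsingleton.elim _ _)
  rw [SpecB.charpoly_B ρ (SpecB.avg_zero ρ hρirr hnontriv), SpecB.charpoly_sym, SpecB.charpoly_sym]
  have hQ : ((Fintype.card G : ℂ)⁻¹ • ∑ s, ρ s ⊗ₖ ρ s⁻¹) *
      ((Fintype.card G : ℂ)⁻¹ • ∑ s, ρ s ⊗ₖ ρ s⁻¹) =
      Matrix.scalar (Fin d × Fin d) ((d : ℂ)⁻¹ ^ 2) := by
    have hq : ∀ i k j l, ((Fintype.card G : ℂ)⁻¹ • ∑ s, ρ s ⊗ₖ ρ s⁻¹) (i, k) (j, l)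
        = if i = l ∧ j = k then (d : ℂ)⁻¹ else 0 := by
      intro i k j l
      rw [← SpecB.avg_swap ρ hρirr hd]
      simp [Matrix.sum_apply]
    ext ⟨i, k⟩ ⟨j, l⟩
    rw [Matrix.mul_apply, Finset.sum_eq_single (k, i)]
    · rw [hq, hq]
      by_cases h1 : i = j <;> by_cases h2 : k = l <;>
        simp [h1, h2, Matrix.diagonal_apply, pow_two, eq_comm]
    · rintro ⟨a, b⟩ _ hb
      rw [hq, if_neg, zero_mul]
      rintro ⟨rfl, rfl⟩
      exact hb rfl
    · simp
  have hQc : (((Fintype.card G : ℂ)⁻¹ • ∑ s, ρ s ⊗ₖ ρ s⁻¹) *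
      ((Fintype.card G : ℂ)⁻¹ • ∑ s, ρ s ⊗ₖ ρ s⁻¹)).charpoly.comp ((X - 1) ^ 2) =
      (X - C (1 + (d : ℂ)⁻¹)) ^ (d ^ 2) * (X - C (1 - (d : ℂ)⁻¹)) ^ (d ^ 2) := by
    rw [hQ, Matrix.scalar_apply, Matrix.charpoly_diagonal, ← mul_pow]
    simp only [Finset.prod_const, Finset.card_univ, Fintype.card_prod, Fintype.card_fin, pow_comp,
      sub_comp, X_comp, C_comp, ← pow_two]
    congr 1
    simp only [C_pow, C_add, C_sub, C_1]
    ring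
  rw [hQc]
  rcases SpecB.P_form ρ hρu hρirr hd _ rfl with h | h
  · left
    rw [h]
    simp only [X_pow_comp, C_1, ← pow_mul]
    ring
  · right
    rw [h]
    obtain ⟨m, hm⟩ : ∃ m, d ^ 2 = m + 1 := Nat.exists_eq_succ_of_ne_zero (by positivity)
    rw [hm]
    have : 2 * (m + 1) - 2 = 2 * m := by omega
    rw [this, show (C 2 : ℂ[X]) = 2 from rfl]
    simp only [mul_comp, sub_comp, one_comp, X_comp, X_pow_comp, C_1, Nat.add_sub_cancel, ← pow_mul]
    ring
end

section
/- Let G be a finite group. Define γ₁^{(2)} := (1/|G|) ∑_{s∈G} γ₁(s) ⊗ γ₁(s) where γ₁(s) = (1/(2|G|)) [[I, R(s)],[R(s⁻¹), I]]. Then rank γ₁^{(2)} = 4|G|² − 5|G| + 3 − m, where m is the number of one-dimensional irreducible complex representations of G (equivalently, m = |G/[G,G]|). -/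
open Kronecker

namespace HS

variable {G : Type*} [Group G] [Fintype G] [DecidableEq G]

/-- column vectors -/
def v (s a : G) : G ⊕ G → ℂ
  | Sum.inl g => if g = a then 1 else 0
  | Sum.inr g => if g = a * s then 1 else 0

/-- the factor matrix -/
def C (G : Type*) [Group G] [Fintype G] [DecidableEq G] :
    Matrix (G × G × G) ((G ⊕ G) × (G ⊕ G)) ℂ :=
  Matrix.of fun t ij => v t.1 t.2.1 ij.1 * v t.1 t.2.2 ij.2

lemma blocks_eq (s : G) (i j : G ⊕ G) :
    Matrix.fromBlocks (1 : Matrix G G ℂ)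
            (Matrix.of fun h g : G => if g = h * s then (1 : ℂ) else 0)
            (Matrix.of fun h g : G => if g = h * s⁻¹ then (1 : ℂ) else 0) 1 i j
      = ∑ a, v s a i * v s a j := by
  have key : ∀ i a : G, (i = a * s) ↔ (a = i * s⁻¹) := fun i a => by
    rw [eq_mul_inv_iff_mul_eq, eq_comm]
  have key2 : ∀ i a : G, (i = a) ↔ (a = i) := fun i a => eq_comm
  rcases i with i | i <;> rcases j with j | j
  · simp [v, Matrix.one_apply]
  · simp only [v, Matrix.fromBlocks_apply₁₂, Matrix.of_apply]
    rw [Finset.sum_eq_single i] <;> simp +contextual [eq_comm]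
  · simp only [v, Matrix.fromBlocks_apply₂₁, Matrix.of_apply]
    rw [Finset.sum_eq_single j] <;> simp +contextual [key, eq_comm]
  · simp only [Matrix.fromBlocks_apply₂₂, v, Matrix.one_apply, key]
    rw [Finset.sum_eq_single (i * s⁻¹)]
    · simp
    · intro b _ hb
      simp [hb]
    · simp

lemma v_star (s a : G) (i : G ⊕ G) : star (v s a i) = v s a i := by
  rcases i with i | i <;> simp only [v] <;> split_ifs <;> simp

lemma mat_eq (c : ℂ) : (c • ∑ s : G,
        ((2 * (Fintype.card G : ℂ))⁻¹ •
          Matrix.fromBlocks (1 : Matrix G G ℂ)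
            (Matrix.of fun h g : G => if g = h * s then (1 : ℂ) else 0)
            (Matrix.of fun h g : G => if g = h * s⁻¹ then (1 : ℂ) else 0) 1) ⊗ₖ
        ((2 * (Fintype.card G : ℂ))⁻¹ •
          Matrix.fromBlocks 1
            (Matrix.of fun h g : G => if g = h * s then (1 : ℂ) else 0)
            (Matrix.of fun h g : G => if g = h * s⁻¹ then (1 : ℂ) else 0) 1)) =
    (c * (2 * (Fintype.card G : ℂ))⁻¹ * (2 * (Fintype.card G : ℂ))⁻¹) •
      ((C G).conjTranspose * C G) := by
  ext ⟨i, j⟩ ⟨k, l⟩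
  simp only [Matrix.smul_apply, Matrix.sum_apply, Matrix.kroneckerMap_apply, blocks_eq,
    Matrix.mul_apply, Matrix.conjTranspose_apply, C, Matrix.of_apply, star_mul', v_star,
    Fintype.sum_prod_type, smul_eq_mul]
  rw [mul_assoc c, mul_assoc c]
  congr 1
  rw [Finset.mul_sum]
  refine Finset.sum_congr rfl fun s _ => ?_
  rw [mul_mul_mul_comm, Finset.sum_mul_sum]
  congr 1
  refine Finset.sum_congr rfl fun a _ => Finset.sum_congr rfl fun b _ => ?_
  ring

lemma C_mulVec (f : (G ⊕ G) × (G ⊕ G) → ℂ) (s a b : G) :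
    (C G).mulVec f (s, a, b) = f (.inl a, .inl b) + f (.inl a, .inr (b * s))
      + f (.inr (a * s), .inl b) + f (.inr (a * s), .inr (b * s)) := by
  simp only [Matrix.mulVec, dotProduct, C, Matrix.of_apply, Fintype.sum_prod_type,
    Fintype.sum_sum_type, v]
  simp [Finset.sum_add_distrib]
  ring

/-- parameter space -/
abbrev P (G : Type*) [Group G] :=
  (G → ℂ) × (G → ℂ) × (G → ℂ) × (G → ℂ) × (G → ℂ) × (Abelianization G → ℂ)

/-- components: p, α, β, γ, δ, q -/
def PhiF (t : P G) : (G ⊕ G) × (G ⊕ G) → ℂ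
  | (.inl a, .inl b) => - t.2.1 a - t.2.2.1 b + t.1 (b * a⁻¹)
  | (.inl a, .inr d) => t.2.1 a + t.2.2.2.2.1 d + t.2.2.2.2.2 (Abelianization.of (a * d))
  | (.inr c, .inl b) => t.2.2.1 b + t.2.2.2.1 c - t.2.2.2.2.2 (Abelianization.of (b * c))
  | (.inr c, .inr d) => - t.2.2.2.2.1 d - t.2.2.2.1 c - t.1 (d * c⁻¹)

/-- the parametrization -/
def Phi (G : Type*) [Group G] : P G →ₗ[ℂ] ((G ⊕ G) × (G ⊕ G) → ℂ) where
  toFun := PhiF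
  map_add' t u := by
    ext ⟨i | i, j | j⟩ <;> simp [PhiF] <;> ring
  map_smul' r t := by
    ext ⟨i | i, j | j⟩ <;> simp [PhiF] <;> ring

/-- constants -/
def iota (G : Type*) [Group G] : (ℂ × ℂ × ℂ) →ₗ[ℂ] P G where
  toFun k := (fun _ => k.1, fun _ => k.2.1, fun _ => k.1 - k.2.1,
    fun _ => - k.1 + k.2.1 + k.2.2, fun _ => - k.2.1 - k.2.2, fun _ => k.2.2)
  map_add' t u := by
    ext <;> simp <;> ring
  map_smul' r t := by
    ext <;> simp <;> ring

lemma iota_inj : Function.Injective (iota G) := by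
  rintro ⟨a, b, c⟩ ⟨a', b', c'⟩ h
  simp only [iota, LinearMap.coe_mk, AddHom.coe_mk, Prod.mk.injEq] at h
  obtain ⟨h1, h2, -, -, -, h3⟩ := h
  have := congrFun h1 1
  have := congrFun h2 1
  have := congrFun h3 1
  simp_all

/-- If `p (b a⁻¹) = α a + β b` then both are constant. -/
lemma const_aux (p α β : G → ℂ) (h : ∀ a b, p (b * a⁻¹) = α a + β b) :
    (∀ a, α a = α 1) ∧ (∀ b, β b = β 1) := by
  have hn : (Fintype.card G : ℂ) ≠ 0 := by simp
  have h1 : ∀ a, (Fintype.card G : ℂ) * α a = (∑ g, p g) - ∑ g, β g := fun a => by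
    have := Equiv.sum_comp (Equiv.mulRight a⁻¹) p
    simp only [Equiv.coe_mulRight, h, Finset.sum_add_distrib] at this
    simp at this
    rw [← this]; ring
  have h2 : ∀ b, (Fintype.card G : ℂ) * β b = (∑ g, p g) - ∑ g, α g := fun b => by
    have := Equiv.sum_comp ((Equiv.inv G).trans (Equiv.mulLeft b)) p
    simp [h, Finset.sum_add_distrib] at this
    rw [← this]; ring
  exact ⟨fun a => mul_left_cancel₀ hn ((h1 a).trans (h1 1).symm),
    fun a => mul_left_cancel₀ hn ((h2 a).trans (h2 1).symm)⟩

lemma of_surj : Function.Surjective (Abelianization.of : G →* Abelianization G) :=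
  QuotientGroup.mk_surjective

lemma ker_Phi : LinearMap.ker (Phi G) = LinearMap.range (iota G) := by
  ext t
  obtain ⟨p, α, β, γ, δ, q⟩ := t
  simp only [LinearMap.mem_ker, LinearMap.mem_range]
  constructor
  · intro h
    have hx : ∀ a b, - α a - β b + p (b * a⁻¹) = 0 := fun a b => congrFun h (.inl a, .inl b)
    have hy : ∀ a d, α a + δ d + q (Abelianization.of (a * d)) = 0 :=
      fun a b => congrFun h (.inl a, .inr b)
    have hz : ∀ c b, β b + γ c - q (Abelianization.of (b * c)) = 0 :=
      fun a b => congrFun h (.inr a, .inl b)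
    have hw : ∀ c d, - δ d - γ c - p (d * c⁻¹) = 0 := fun a b => congrFun h (.inr a, .inr b)
    obtain ⟨hα, hβ⟩ := const_aux p α β (fun a b => by linear_combination hx a b)
    obtain ⟨hγ, hδ⟩ := const_aux (fun g => - p g) γ δ (fun a b => by linear_combination hw a b)
    have hp : ∀ g, p g = p 1 := fun g => by
      have h1 := hx 1 g
      have h2 := hx 1 1
      simp only [inv_one, mul_one] at h1 h2
      linear_combination h1 - h2 + hβ g
    have hq : ∀ g, q g = q 1 := fun g => by
      obtain ⟨g, rfl⟩ := of_surj g
      have h1 := hy 1 g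
      have h2 := hy 1 1
      simp only [one_mul, map_one] at h1 h2
      linear_combination h1 - h2 - hδ g
    have h1 := hx 1 1
    have h2 := hy 1 1
    have h3 := hz 1 1
    have h4 := hw 1 1
    simp only [inv_one, mul_one, map_one] at h1 h2 h3 h4
    refine ⟨(p 1, α 1, q 1), ?_⟩
    simp only [iota, LinearMap.coe_mk, AddHom.coe_mk, Prod.mk.injEq]
    refine ⟨?_, ?_, ?_, ?_, ?_, ?_⟩ <;> funext g
    · exact (hp g).symm
    · exact (hα g).symm
    · linear_combination h1 - hβ g
    · linear_combination -hγ g - h1 - h3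
    · linear_combination - hδ g - h2
    · exact (hq g).symm
  · rintro ⟨⟨a, b, c⟩, h⟩
    rw [← h]
    ext ⟨i | i, j | j⟩ <;> simp [Phi, PhiF, iota] <;> ring

lemma inv_comm (q : G → ℂ) (h : ∀ c u a, q (c * u * a) = q (u * c * a)) (g g' : G)
    (hg : (Abelianization.of g) = Abelianization.of g') : q g = q g' := by
  let H : Subgroup G :=
    { carrier := {k | ∀ g, q (k * g) = q g}
      one_mem' := by simp
      mul_mem' := by
        intro a b ha hb g
        rw [mul_assoc, ha, hb]
      inv_mem' := by
        intro a ha g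
        have := ha (a⁻¹ * g)
        rw [← this]; simp }
  have hH : commutator G ≤ H := by
    rw [commutator_def, Subgroup.commutator_le]
    intro c _ u _ g
    have := h c u (c⁻¹ * u⁻¹ * g)
    simpa [commutatorElement_def, mul_assoc] using this
  have h1 : g' * g⁻¹ ∈ commutator G := by
    rw [← Abelianization.ker_of, MonoidHom.mem_ker, map_mul, map_inv, hg]; simp
  have := hH h1 g
  simpa using this.symm

lemma range_Phi : LinearMap.range (Phi G) = LinearMap.ker (C G).mulVecLin := by
  have hn : (Fintype.card G : ℂ) ≠ 0 := by simp
  ext f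
  simp only [LinearMap.mem_ker, LinearMap.mem_range, Matrix.mulVecLin_apply]
  constructor
  · rintro ⟨⟨p, α, β, γ, δ, q⟩, rfl⟩
    ext ⟨s, a, b⟩
    rw [C_mulVec]
    simp only [Phi, PhiF, LinearMap.coe_mk, AddHom.coe_mk, Pi.zero_apply]
    have e1 : b * s * (a * s)⁻¹ = b * a⁻¹ := by group
    have e2 : Abelianization.of (a * (b * s)) = Abelianization.of (b * (a * s)) := by
      simp only [map_mul]; exact mul_left_comm _ _ _
    rw [e1, e2]; ring
  · intro h
    have E : ∀ a c u, f (.inl a, .inl (u * a)) + f (.inl a, .inr (u * c))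
      + f (.inr c, .inl (u * a)) + f (.inr c, .inr (u * c)) = 0 := fun a c u => by
      have := congrFun h (a⁻¹ * c, a, u * a)
      rw [C_mulVec] at this
      simpa [mul_assoc] using this
    obtain ⟨x, hx⟩ : ∃ x : G → G → ℂ, ∀ a b, f (.inl a, .inl b) = x a b := ⟨_, fun _ _ => rfl⟩
    obtain ⟨y, hy⟩ : ∃ x : G → G → ℂ, ∀ a b, f (.inl a, .inr b) = x a b := ⟨_, fun _ _ => rfl⟩
    obtain ⟨z, hz⟩ : ∃ x : G → G → ℂ, ∀ a b, f (.inr a, .inl b) = x a b := ⟨_, fun _ _ => rfl⟩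
    obtain ⟨w, hw⟩ : ∃ x : G → G → ℂ, ∀ a b, f (.inr a, .inr b) = x a b := ⟨_, fun _ _ => rfl⟩
    simp only [hx, hy, hz, hw] at E
    obtain ⟨Y, hY⟩ : ∃ Y : G → G → ℂ, ∀ a d, Y a d = y a d - y 1 d - y a 1 + y 1 1 :=
      ⟨_, fun _ _ => rfl⟩
    obtain ⟨Z, hZ⟩ : ∃ Z : G → G → ℂ, ∀ a d, Z a d = z a d - z 1 d - z a 1 + z 1 1 :=
      ⟨_, fun _ _ => rfl⟩
    have D : ∀ a c u, Y a (u * c) - Y a u + Z c (u * a) - Z c u = 0 := fun a c u => by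
      have h1 := E a c u
      have h2 := E 1 c u
      have h3 := E a 1 u
      have h4 := E 1 1 u
      simp only [mul_one] at h1 h2 h3 h4
      simp only [hY, hZ]
      linear_combination h1 - h2 - h3 + h4
    have hYZ : ∀ a c, Z c a = - Y a c := fun a c => by
      have h1 := D a c 1
      have h2 : Y a 1 = 0 := by rw [hY]; ring
      have h3 : Z c 1 = 0 := by rw [hZ]; ring
      simp only [one_mul, h2, h3] at h1
      linear_combination h1
    have D' : ∀ a c u, Y (u * a) c - Y a (u * c) - Y u c + Y a u = 0 := fun a c u => by
      have := D a c u
      rw [hYZ, hYZ] at this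
      linear_combination -this
    obtain ⟨q, hq⟩ : ∃ q : G → ℂ, ∀ a, q a = - (Fintype.card G : ℂ)⁻¹ * ∑ c, Y a c :=
      ⟨_, fun _ => rfl⟩
    have hYq : ∀ a u, Y a u = q (u * a) - q a - q u := fun a u => by
      have h1 : ∑ c, (Y (u * a) c - Y a (u * c) - Y u c + Y a u) = 0 :=
        Finset.sum_eq_zero fun c _ => D' a c u
      have h2 : ∑ c, Y a (u * c) = ∑ c, Y a c := Equiv.sum_comp (Equiv.mulLeft u) (Y a)
      rw [Finset.sum_add_distrib, Finset.sum_sub_distrib, Finset.sum_sub_distrib, h2] at h1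
      simp only [Finset.sum_const, Finset.card_univ, nsmul_eq_mul] at h1
      simp only [hq]
      field_simp
      linear_combination h1
    have hc0 : ∀ a c u, q (c * u * a) - q (u * c * a) + q (u * c) - q (c * u) = 0 := fun a c u => by
      have := D' a c u
      simp only [hYq] at this
      rw [← mul_assoc] at this
      linear_combination this
    have hc1 : ∀ c u, q (u * c) = q (c * u) := fun c u => by
      have h1 : ∑ a, (q (c * u * a) - q (u * c * a) + (q (u * c) - q (c * u))) = 0 :=
        Finset.sum_eq_zero fun a _ => by linear_combination hc0 a c u
      have h2 : ∀ g, ∑ a, q (g * a) = ∑ a, q a := fun g => Equiv.sum_comp (Equiv.mulLeft g) q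
      rw [Finset.sum_add_distrib, Finset.sum_sub_distrib, h2, h2] at h1
      simp only [Finset.sum_const, Finset.card_univ, nsmul_eq_mul, sub_self, zero_add] at h1
      have := (mul_eq_zero.1 h1).resolve_left hn
      linear_combination this
    have hc : ∀ c u a, q (c * u * a) = q (u * c * a) := fun c u a => by
      linear_combination hc0 a c u - hc1 c u
    have hQ : ∀ g, q (Function.surjInv of_surj (Abelianization.of g)) = q g :=
      fun g => inv_comm q hc _ _ (Function.surjInv_eq of_surj _)
    have hyq : ∀ a d, y a d = q (a * d) - q a - q d + y 1 d + y a 1 - y 1 1 := fun a d => by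
      have h1 := hY a d
      rw [hYq, ← hc1] at h1
      linear_combination -h1
    have hzq : ∀ c b, z c b = - q (b * c) + q b + q c + z 1 b + z c 1 - z 1 1 := fun c b => by
      have h1 := hZ c b
      rw [hYZ, hYq, hc1] at h1
      linear_combination -h1
    refine ⟨(fun u => x 1 u + (y 1 1 - q 1) + (z 1 u + q u), fun a => y a 1 - q a,
      fun b => z 1 b + q b, fun c => z c 1 + q c - z 1 1, fun d => y 1 d - q d - y 1 1,
      fun g => q (Function.surjInv of_surj g)), ?_⟩
    ext ⟨i | i, j | j⟩ <;> simp only [Phi, PhiF, LinearMap.coe_mk, AddHom.coe_mk, hx, hy, hz, hw, hQ]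
    · have h1 := E i 1 (j * i⁻¹)
      have h2 := E 1 1 (j * i⁻¹)
      simp only [inv_mul_cancel_right, mul_one] at h1 h2
      have h3 := hyq i (j * i⁻¹)
      have h4 := hzq 1 j
      have h5 := hc1 i (j * i⁻¹)
      simp only [inv_mul_cancel_right, mul_one] at h3 h4 h5
      linear_combination h2 - h1 + h3 - h5 + h4
    · linear_combination -hyq i j
    · linear_combination -hzq i j
    · have h1 := E 1 i (j * i⁻¹)
      simp only [inv_mul_cancel_right, mul_one] at h1
      have h4 := hzq i (j * i⁻¹)
      simp only [inv_mul_cancel_right, mul_one] at h4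
      have h5 := hyq 1 j
      simp only [one_mul] at h5
      linear_combination -h1 + h4 + h5

lemma rank_C : ((C G).rank : ℤ) = 4 * (Fintype.card G : ℤ) ^ 2 - 5 * (Fintype.card G : ℤ) + 3
          - ((commutator G).index : ℤ) := by
  classical
  haveI : Fintype (Abelianization G) := Fintype.ofFinite _
  have h1 := LinearMap.finrank_range_add_finrank_ker (C G).mulVecLin
  have h2 := LinearMap.finrank_range_add_finrank_ker (Phi G)
  rw [ker_Phi, LinearMap.finrank_range_of_inj iota_inj, range_Phi] at h2
  have h3 : (commutator G).index = Fintype.card (Abelianization G) := by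
    rw [← Nat.card_eq_fintype_card]; rfl
  rw [h3]
  simp only [Module.finrank_prod, Module.finrank_fintype_fun_eq_card, Module.finrank_self,
    Fintype.card_prod, Fintype.card_sum] at h1 h2
  rw [Matrix.rank]
  zify at h1 h2
  linarith

open scoped ComplexOrder in
lemma rank_CC : ((C G).conjTranspose * C G).rank = (C G).rank :=
  Matrix.rank_conjTranspose_mul_self _

end HS

open Kronecker in
/-- The rank of the k = 2 averaged hidden shift state
`γ₁^{(2)} = (1/|G|) ∑_s γ₁(s) ⊗ γ₁(s)` equals `4|G|² − 5|G| + 3 − m`,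
where `m` is the number of one-dimensional irreducible complex representations of `G`,
i.e. the index of the commutator subgroup. -/
theorem rank_averaged_hidden_shift_state_two
    {G : Type*} [Group G] [Fintype G] [DecidableEq G] :
    ((((Fintype.card G : ℂ))⁻¹ • ∑ s : G,
        ((2 * (Fintype.card G : ℂ))⁻¹ •
          Matrix.fromBlocks 1
            (Matrix.of fun h g : G => if g = h * s then (1 : ℂ) else 0)
            (Matrix.of fun h g : G => if g = h * s⁻¹ then (1 : ℂ) else 0) 1) ⊗ₖ
        ((2 * (Fintype.card G : ℂ))⁻¹ •
          Matrix.fromBlocks 1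
            (Matrix.of fun h g : G => if g = h * s then (1 : ℂ) else 0)
            (Matrix.of fun h g : G => if g = h * s⁻¹ then (1 : ℂ) else 0) 1)).rank : ℤ)
      = 4 * (Fintype.card G : ℤ) ^ 2 - 5 * (Fintype.card G : ℤ) + 3
          - ((commutator G).index : ℤ) := by
  rw [HS.mat_eq, Matrix.rank_smul_of_mem_nonZeroDivisors, HS.rank_CC]
  · exact HS.rank_C
  · exact mem_nonZeroDivisors_of_ne_zero (by simp)
end
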